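/- arXiv:2112.09329 — 3 statements merged into one kernel-verified Lean document; each statement's English description precedes it below -/
import Mathlib

section
/- Let e* ∈ ℝ³ be a unit vector. Let n₁, …, n_J ∈ ℝ³ be unit vectors with n_jᵀe* = 0 for all j, and let m₁, …, m_I ∈ ℝ³ be unit vectors with m_i = e* or m_i = −e* for all i. Set H = ∑_j n_j n_jᵀ − ∑_i m_i m_iᵀ. Then e*ᵀHe* = −I, and for every unit vector e ∈ ℝ³, e*ᵀHe* ≤ eᵀHe; that is, the true extrusion axis e* is a global minimizer of the quadratic form eᵀHe over the unit sphere. -/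
/-!
The form is `eᵀHe = ∑ j, (n_j ⬝ e)² - ∑ i, (m_i ⬝ e)²`. Cauchy–Schwarz gives
`eᵀHe ≥ -(∑ i, |m_i|²) |e|²`, with equality when every `n_j` is orthogonal to `e` and every `m_i` is
parallel to `e`. This is the case at the true axis, which therefore attains the lower bound.
-/

open Matrix

section CommRing

variable {R ι κ d : Type*} [CommRing R] [Fintype ι] [Fintype κ] [Fintype d]

/-- The matrix `H = ∑ j, n_j n_jᵀ - ∑ i, m_i m_iᵀ` of barrel normals `n` and base normals `m`, whose
quadratic form over unit vectors is minimal at an extrusion axis fitting the normals. The normals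
may have any length, which amounts to weighting them. -/
def extrusionMatrix (n : κ → d → R) (m : ι → d → R) : Matrix d d R :=
  ∑ j, vecMulVec (n j) (n j) - ∑ i, vecMulVec (m i) (m i)

lemma dotProduct_vecMulVec_self_mulVec (v e : d → R) :
    e ⬝ᵥ vecMulVec v v *ᵥ e = (v ⬝ᵥ e) ^ 2 := by
  rw [vecMulVec_mulVec, op_smul_eq_smul, dotProduct_smul, smul_eq_mul, dotProduct_comm e v, sq]

lemma dotProduct_extrusionMatrix_mulVec (n : κ → d → R) (m : ι → d → R) (e : d → R) :
    e ⬝ᵥ extrusionMatrix n m *ᵥ e = ∑ j, (n j ⬝ᵥ e) ^ 2 - ∑ i, (m i ⬝ᵥ e) ^ 2 := by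
  simp only [extrusionMatrix, sub_mulVec, sum_mulVec, dotProduct_sub, dotProduct_sum,
    dotProduct_vecMulVec_self_mulVec]

lemma sq_dotProduct_eq_of_mem_span_singleton {v w : d → R} (h : v ∈ Submodule.span R {w}) :
    (v ⬝ᵥ w) ^ 2 = (v ⬝ᵥ v) * (w ⬝ᵥ w) := by
  obtain ⟨c, rfl⟩ := Submodule.mem_span_singleton.mp h
  simp only [smul_dotProduct, dotProduct_smul, smul_eq_mul]
  ring

lemma dotProduct_extrusionMatrix_mulVec_eq_neg_sum_mul {n : κ → d → R} {m : ι → d → R} {a : d → R}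
    (hn : ∀ j, n j ⬝ᵥ a = 0) (hm : ∀ i, m i ∈ Submodule.span R {a}) :
    a ⬝ᵥ extrusionMatrix n m *ᵥ a = -((∑ i, m i ⬝ᵥ m i) * (a ⬝ᵥ a)) := by
  simp [dotProduct_extrusionMatrix_mulVec, hn, sq_dotProduct_eq_of_mem_span_singleton (hm _),
    Finset.sum_mul]

end CommRing

section Ordered

variable {R ι κ d : Type*} [CommRing R] [LinearOrder R] [IsStrictOrderedRing R]
  [Fintype ι] [Fintype κ] [Fintype d]

lemma sq_dotProduct_le_dotProduct_self_mul (v w : d → R) :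
    (v ⬝ᵥ w) ^ 2 ≤ (v ⬝ᵥ v) * (w ⬝ᵥ w) := by
  simpa only [dotProduct, sq] using Finset.sum_mul_sq_le_sq_mul_sq Finset.univ v w

lemma neg_sum_mul_le_dotProduct_extrusionMatrix_mulVec (n : κ → d → R) (m : ι → d → R)
    (e : d → R) :
    -((∑ i, m i ⬝ᵥ m i) * (e ⬝ᵥ e)) ≤ e ⬝ᵥ extrusionMatrix n m *ᵥ e := by
  have barrel_nonneg : 0 ≤ ∑ j, (n j ⬝ᵥ e) ^ 2 := Finset.sum_nonneg fun j _ => sq_nonneg _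
  have base_le : ∑ i, (m i ⬝ᵥ e) ^ 2 ≤ (∑ i, m i ⬝ᵥ m i) * (e ⬝ᵥ e) := by
    rw [Finset.sum_mul]
    exact Finset.sum_le_sum fun i _ => sq_dotProduct_le_dotProduct_self_mul (m i) e
  rw [dotProduct_extrusionMatrix_mulVec]
  linarith

theorem true_axis_minimizes_extrusion_quadratic_form_general
    {n : κ → d → R} {m : ι → d → R} {a : d → R} (ha : a ⬝ᵥ a = 1)
    (hn : ∀ j, n j ⬝ᵥ a = 0) (hm : ∀ i, m i ∈ Submodule.span R {a}) :
    a ⬝ᵥ extrusionMatrix n m *ᵥ a = -∑ i, m i ⬝ᵥ m i ∧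
      ∀ e : d → R, e ⬝ᵥ e ≤ 1 →
        a ⬝ᵥ extrusionMatrix n m *ᵥ a ≤ e ⬝ᵥ extrusionMatrix n m *ᵥ e := by
  have value : a ⬝ᵥ extrusionMatrix n m *ᵥ a = -∑ i, m i ⬝ᵥ m i := by
    rw [dotProduct_extrusionMatrix_mulVec_eq_neg_sum_mul hn hm, ha, mul_one]
  have base_nonneg : 0 ≤ ∑ i, m i ⬝ᵥ m i :=
    Finset.sum_nonneg fun i _ => Finset.sum_nonneg fun k _ => mul_self_nonneg (m i k)
  refine ⟨value, fun e he => ?_⟩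
  calc a ⬝ᵥ extrusionMatrix n m *ᵥ a = -∑ i, m i ⬝ᵥ m i := value
    _ ≤ -((∑ i, m i ⬝ᵥ m i) * (e ⬝ᵥ e)) :=
      neg_le_neg (mul_le_of_le_one_right base_nonneg he)
    _ ≤ e ⬝ᵥ extrusionMatrix n m *ᵥ e :=
      neg_sum_mul_le_dotProduct_extrusionMatrix_mulVec n m e

end Ordered

lemma sqrt_sum_sq_eq_one_iff_dotProduct_self {d : Type*} [Fintype d] {v : d → ℝ} :
    Real.sqrt (∑ k, v k ^ 2) = 1 ↔ v ⬝ᵥ v = 1 := by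
  simp only [Real.sqrt_eq_one, dotProduct, sq]

lemma mem_span_singleton_of_eq_or_eq_neg {R M : Type*} [Ring R] [AddCommGroup M] [Module R M]
    {x y : M} (h : x = y ∨ x = -y) : x ∈ Submodule.span R {y} := by
  rcases h with rfl | rfl
  · exact Submodule.mem_span_singleton_self x
  · exact neg_mem (Submodule.mem_span_singleton_self y)

/-- If the unit barrel normals `n_j` are orthogonal to the unit axis `e*` and the
unit base normals `m_i` equal `±e*`, then for `H = ∑ j, n_j n_jᵀ − ∑ i, m_i m_iᵀ` we have
`e*ᵀHe* = −I` and `e*` globally minimizes the quadratic form over the unit sphere. -/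
theorem true_axis_minimizes_extrusion_quadratic_form
    (J I : ℕ) (estar : Fin 3 → ℝ) (hstar : Real.sqrt (∑ k, estar k ^ 2) = 1)
    (nv : Fin J → Fin 3 → ℝ) (hn : ∀ j, Real.sqrt (∑ k, nv j k ^ 2) = 1)
    (hno : ∀ j, nv j ⬝ᵥ estar = 0)
    (mv : Fin I → Fin 3 → ℝ) (hm : ∀ i, Real.sqrt (∑ k, mv i k ^ 2) = 1)
    (hmp : ∀ i, mv i = estar ∨ mv i = -estar)
    (H : Matrix (Fin 3) (Fin 3) ℝ)
    (hH : H = ∑ j, vecMulVec (nv j) (nv j) - ∑ i, vecMulVec (mv i) (mv i)) :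
    estar ⬝ᵥ H.mulVec estar = -(I : ℝ) ∧
      ∀ e : Fin 3 → ℝ, Real.sqrt (∑ k, e k ^ 2) = 1 →
        estar ⬝ᵥ H.mulVec estar ≤ e ⬝ᵥ H.mulVec e := by
  obtain rfl : H = extrusionMatrix nv mv := hH
  simp only [sqrt_sum_sq_eq_one_iff_dotProduct_self] at hstar hm ⊢
  have general := true_axis_minimizes_extrusion_quadratic_form_general hstar hno
    fun i => mem_span_singleton_of_eq_or_eq_neg (hmp i)
  exact ⟨by simpa [hm] using general.1, fun e he => general.2 e he.le⟩
end

section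
/- Let e* ∈ ℝ³ be a unit vector. Let n₁, …, n_J ∈ ℝ³ be unit vectors with n_jᵀe* = 0 for all j, and let m₁, …, m_I ∈ ℝ³ be unit vectors with m_i = e* or m_i = −e* for all i, where I ≥ 1. Set H = ∑_j n_j n_jᵀ − ∑_i m_i m_iᵀ. Then every unit vector e ∈ ℝ³ minimizing eᵀHe over the unit sphere satisfies e = e* or e = −e*; that is, the extrusion axis is recovered uniquely up to sign. -/
open Matrix

/-!
The quadratic form of `H` at `e` is `∑ j, (n_j ⬝ e)² - I (e* ⬝ e)²`, with value `-I` at `e*`. If its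
value at a unit vector `e` is at most `-I`, then, the barrel terms being nonnegative,
`I ≤ I (e* ⬝ e)²`, so `1 ≤ |e* ⬝ e|`. This is the equality case of the Cauchy–Schwarz inequality,
whence `e = ±e*`.
-/

lemma dotProduct_sum_vecMulVec_self_mulVec {R ι κ : Type*} [CommSemiring R] [Fintype ι] [Fintype κ]
    (v : κ → ι → R) (x : ι → R) :
    x ⬝ᵥ (∑ j, vecMulVec (v j) (v j)) *ᵥ x = ∑ j, (v j ⬝ᵥ x) ^ 2 := by
  simp only [dotProduct_comm x, sum_mulVec, vecMulVec_mulVec, op_smul_eq_smul, sum_dotProduct,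
    smul_dotProduct, smul_eq_mul, sq]

lemma sqrt_sum_sq_eq_one_iff {ι : Type*} [Fintype ι] (v : ι → ℝ) :
    √(∑ k, v k ^ 2) = 1 ↔ v ⬝ᵥ v = 1 := by
  simp only [Real.sqrt_eq_one, dotProduct, sq]

section OrderedRing

variable {R ι : Type*} [CommRing R] [LinearOrder R] [IsStrictOrderedRing R] [Fintype ι]
  {x y : ι → R}

lemma eq_of_one_le_dotProduct (hx : x ⬝ᵥ x ≤ 1) (hy : y ⬝ᵥ y ≤ 1) (hxy : 1 ≤ x ⬝ᵥ y) : x = y := by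
  have hexpand : (x - y) ⬝ᵥ (x - y) = x ⬝ᵥ x - 2 * (x ⬝ᵥ y) + y ⬝ᵥ y := by
    simp only [sub_dotProduct, dotProduct_sub, dotProduct_comm y x]
    ring
  have hnonneg : 0 ≤ (x - y) ⬝ᵥ (x - y) := Finset.sum_nonneg fun k _ ↦ mul_self_nonneg ((x - y) k)
  exact sub_eq_zero.1 (dotProduct_self_eq_zero.1 (by linarith))

lemma eq_or_eq_neg_of_one_le_abs_dotProduct (hx : x ⬝ᵥ x ≤ 1) (hy : y ⬝ᵥ y ≤ 1)
    (hxy : 1 ≤ |x ⬝ᵥ y|) : x = y ∨ x = -y := by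
  refine (le_abs.1 hxy).imp (eq_of_one_le_dotProduct hx hy) fun hneg ↦ ?_
  exact eq_of_one_le_dotProduct hx (by rwa [neg_dotProduct_neg]) (by rwa [dotProduct_neg])

theorem axis_recovered_uniquely_up_to_sign_general {α β : Type*} [Fintype α] [Fintype β]
    [Nonempty β] {axis e : ι → R} (haxis : axis ⬝ᵥ axis = 1)
    {barrel : α → ι → R} (hbarrel : ∀ j, barrel j ⬝ᵥ axis = 0)
    {base : β → ι → R} (hbase : ∀ i, base i = axis ∨ base i = -axis)
    {H : Matrix ι ι R}
    (hH : H = ∑ j, vecMulVec (barrel j) (barrel j) - ∑ i, vecMulVec (base i) (base i))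
    (he : e ⬝ᵥ e ≤ 1) (hle : e ⬝ᵥ H *ᵥ e ≤ axis ⬝ᵥ H *ᵥ axis) : e = axis ∨ e = -axis := by
  have hbase_sq (x : ι → R) (i : β) : (base i ⬝ᵥ x) ^ 2 = (axis ⬝ᵥ x) ^ 2 := by
    rcases hbase i with h | h <;> simp only [h, neg_dotProduct, neg_sq]
  have hform (x : ι → R) :
      x ⬝ᵥ H *ᵥ x = ∑ j, (barrel j ⬝ᵥ x) ^ 2 - Fintype.card β * (axis ⬝ᵥ x) ^ 2 := by
    simp only [hH, sub_mulVec, dotProduct_sub, dotProduct_sum_vecMulVec_self_mulVec, hbase_sq,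
      Finset.sum_const, Finset.card_univ, nsmul_eq_mul]
  have hform_axis : axis ⬝ᵥ H *ᵥ axis = -Fintype.card β := by
    simp [hform, hbarrel, haxis]
  have hbarrel_nonneg : 0 ≤ ∑ j, (barrel j ⬝ᵥ e) ^ 2 := Finset.sum_nonneg fun j _ ↦ sq_nonneg _
  have hcard_pos : (0 : R) < Fintype.card β := Nat.cast_pos.2 Fintype.card_pos
  have hsq : 1 ≤ (axis ⬝ᵥ e) ^ 2 := by
    rw [hform e, hform_axis] at hle
    exact le_of_mul_le_mul_left (by linarith) hcard_pos
  rw [one_le_sq_iff_one_le_abs, dotProduct_comm] at hsq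
  exact eq_or_eq_neg_of_one_le_abs_dotProduct he haxis.le hsq

end OrderedRing

/-- With unit barrel normals orthogonal to the unit axis `e*`, unit base normals
equal to `±e*`, and at least one base normal (`I ≥ 1`), every unit vector minimizing the quadratic
form of `H = ∑ j, n_j n_jᵀ − ∑ i, m_i m_iᵀ` over the unit sphere equals `e*` or `−e*`. -/
theorem axis_recovered_uniquely_up_to_sign
    (J I : ℕ) (hI : 1 ≤ I)
    (estar : Fin 3 → ℝ) (hstar : Real.sqrt (∑ k, estar k ^ 2) = 1)
    (nv : Fin J → Fin 3 → ℝ) (hn : ∀ j, Real.sqrt (∑ k, nv j k ^ 2) = 1)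
    (hno : ∀ j, nv j ⬝ᵥ estar = 0)
    (mv : Fin I → Fin 3 → ℝ) (hm : ∀ i, Real.sqrt (∑ k, mv i k ^ 2) = 1)
    (hmp : ∀ i, mv i = estar ∨ mv i = -estar)
    (H : Matrix (Fin 3) (Fin 3) ℝ)
    (hH : H = ∑ j, vecMulVec (nv j) (nv j) - ∑ i, vecMulVec (mv i) (mv i)) :
    ∀ e : Fin 3 → ℝ, Real.sqrt (∑ k, e k ^ 2) = 1 →
      (∀ e' : Fin 3 → ℝ, Real.sqrt (∑ k, e' k ^ 2) = 1 →
        e ⬝ᵥ H.mulVec e ≤ e' ⬝ᵥ H.mulVec e') →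
      e = estar ∨ e = -estar := by
  intro e he hmin
  have : NeZero I := ⟨Nat.one_le_iff_ne_zero.1 hI⟩
  exact axis_recovered_uniquely_up_to_sign_general ((sqrt_sum_sq_eq_one_iff estar).1 hstar) hno
    hmp hH ((sqrt_sum_sq_eq_one_iff e).1 he).le (hmin estar hstar)
end

section
/- Let K ≥ 1 and let J denote the 2K×2K all-ones matrix. Then the rank of the matrix D = Δ_W Δ_Wᵀ + Δ_B Δ_Bᵀ + J ∈ ℝ^{2K×2K} equals K + 1. -/
/-!
Put `B = [Δ_W | Δ_B]`. Since `J = 𝟏𝟏ᵀ` and `𝟏`, the sum of the columns of `Δ_W`, lies in the column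
space of `B`, the matrix `D = B Bᵀ + 𝟏𝟏ᵀ` has the same rank as `B`. As `B` sends a pair of vectors
`(u, v)` to the function `(k, a) ↦ u k + v a`, its kernel is the line spanned by `(𝟏, -𝟏)`, and
rank-nullity gives `rank B = K + 2 - 1`.
-/

open Matrix

/-- The matrix `Δ_W ∈ ℝ^{2K×K}`, with rows indexed by pairs `(k, a)`:
`(Δ_W)_{(k,a),k'} = 1` if `k = k'` and `0` otherwise. -/
def deltaW (K : ℕ) : Matrix (Fin K × Fin 2) (Fin K) ℝ :=
  Matrix.of fun p k' => if p.1 = k' then 1 else 0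

/-- The matrix `Δ_B ∈ ℝ^{2K×2}`, with rows indexed by pairs `(k, a)`:
`(Δ_B)_{(k,a),b} = 1` if `a = b` and `0` otherwise. -/
def deltaB (K : ℕ) : Matrix (Fin K × Fin 2) (Fin 2) ℝ :=
  Matrix.of fun p b => if p.2 = b then 1 else 0

section GramMatrix

variable {R m n l : Type*} [Fintype n] [Fintype l]

lemma rank_fromCols_mul_self [CommSemiring R] [StrongRankCondition R]
    (A : Matrix m n R) (T : Matrix n l R) : (fromCols A (A * T)).rank = A.rank := by
  classical
  apply le_antisymm
  · have factor : fromCols A (A * T) = A * fromCols 1 T := by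
      rw [mul_fromCols, Matrix.mul_one]
    exact factor ▸ rank_mul_le_left _ _
  · have select : A = fromCols A (A * T) * (fromRows 1 0 : Matrix (n ⊕ l) n R) := by
      rw [fromCols_mul_fromRows, Matrix.mul_one, Matrix.mul_zero, add_zero]
    exact (congrArg rank select).trans_le (rank_mul_le_left _ _)

variable [Fintype m] [Field R] [LinearOrder R] [IsStrictOrderedRing R]

lemma rank_mul_transpose_add_mul_transpose (A : Matrix m n R) (C : Matrix m l R) :
    (A * Aᵀ + C * Cᵀ).rank = (fromCols A C).rank := by
  rw [← rank_self_mul_transpose (fromCols A C), transpose_fromCols, fromCols_mul_fromRows]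

lemma rank_mul_transpose_add_vecMulVec_mulVec (A : Matrix m n R) (w : n → R) :
    (A * Aᵀ + vecMulVec (A *ᵥ w) (A *ᵥ w)).rank = A.rank := by
  rw [vecMulVec_eq Unit, ← transpose_replicateCol, replicateCol_mulVec,
    rank_mul_transpose_add_mul_transpose, rank_fromCols_mul_self]

end GramMatrix

/-- The matrix of the pullback `v ↦ v ∘ f` along `f : p → q`: its row `i` is the standard basis
vector at `f i`. Both `Δ_W` and `Δ_B` are of this form, for the two projections of a product. -/
def pullbackMatrix (R : Type*) [Zero R] [One R] {p q : Type*} [DecidableEq q] (f : p → q) :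
    Matrix p q R :=
  (1 : Matrix q q R).submatrix f id

lemma pullbackMatrix_mulVec {R p q : Type*} [NonAssocSemiring R] [Fintype q] [DecidableEq q]
    (f : p → q) (v : q → R) : pullbackMatrix R f *ᵥ v = v ∘ f := by
  ext i
  exact congrFun (one_mulVec v) (f i)

lemma deltaW_eq_pullbackMatrix (K : ℕ) : deltaW K = pullbackMatrix ℝ Prod.fst := by
  ext p k
  simp [deltaW, pullbackMatrix, one_apply]

lemma deltaB_eq_pullbackMatrix (K : ℕ) : deltaB K = pullbackMatrix ℝ Prod.snd := by
  ext p b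
  simp [deltaB, pullbackMatrix, one_apply]

/-- The block matrix `[Δ_W | Δ_B]` for a general product `m × n` in place of `Fin K × Fin 2`. It is
the edge-vertex incidence matrix of the complete bipartite graph on `m ⊕ n`. -/
def bipartiteIncidence (R : Type*) [Zero R] [One R] (m n : Type*) [DecidableEq m]
    [DecidableEq n] : Matrix (m × n) (m ⊕ n) R :=
  fromCols (pullbackMatrix R Prod.fst) (pullbackMatrix R Prod.snd)

namespace bipartiteIncidence

variable {R m n : Type*} [Fintype m] [Fintype n] [DecidableEq m] [DecidableEq n]

lemma mulVec_apply [Semiring R] (x : m ⊕ n → R) (p : m × n) :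
    (bipartiteIncidence R m n *ᵥ x) p = x (.inl p.1) + x (.inr p.2) := by
  simp [bipartiteIncidence, fromCols_mulVec, pullbackMatrix_mulVec]

lemma mul_transpose [Semiring R] :
    bipartiteIncidence R m n * (bipartiteIncidence R m n)ᵀ =
      pullbackMatrix R (@Prod.fst m n) * (pullbackMatrix R (@Prod.fst m n))ᵀ +
        pullbackMatrix R (@Prod.snd m n) * (pullbackMatrix R (@Prod.snd m n))ᵀ := by
  rw [bipartiteIncidence, transpose_fromCols, fromCols_mul_fromRows]

lemma mulVec_elim_one_zero [Semiring R] :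
    bipartiteIncidence R m n *ᵥ Sum.elim 1 0 = 1 := by
  ext p
  simp [mulVec_apply]

variable [Nonempty m] [Nonempty n]

lemma ker_mulVecLin [CommRing R] :
    LinearMap.ker (bipartiteIncidence R m n).mulVecLin =
      Submodule.span R {(Sum.elim 1 (-1) : m ⊕ n → R)} := by
  ext x
  rw [LinearMap.mem_ker, mulVecLin_apply, Submodule.mem_span_singleton]
  constructor
  · intro hx
    obtain ⟨i₀⟩ := ‹Nonempty m›
    obtain ⟨j₀⟩ := ‹Nonempty n›
    have hsum (i : m) (j : n) : x (.inl i) + x (.inr j) = 0 := by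
      rw [← mulVec_apply x (i, j), hx, Pi.zero_apply]
    refine ⟨x (.inl i₀), funext ?_⟩
    rintro (i | j)
    · simpa using add_right_cancel ((hsum i₀ j₀).trans (hsum i j₀).symm)
    · simpa using neg_eq_of_add_eq_zero_right (hsum i₀ j)
  · rintro ⟨c, rfl⟩
    ext p
    simp [mulVec_apply]

lemma rank_add_one [Field R] :
    (bipartiteIncidence R m n).rank + 1 = Fintype.card m + Fintype.card n := by
  have generator_ne_zero : (Sum.elim 1 (-1) : m ⊕ n → R) ≠ 0 := fun h ↦
    one_ne_zero (congrFun h (.inl (Classical.arbitrary m)))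
  rw [← finrank_span_singleton (K := R) generator_ne_zero, ← ker_mulVecLin, Matrix.rank,
    LinearMap.finrank_range_add_finrank_ker, Module.finrank_fintype_fun_eq_card,
    Fintype.card_sum]

end bipartiteIncidence

theorem rank_D_eq_K_add_one_general (R m n : Type*) [Field R] [LinearOrder R]
    [IsStrictOrderedRing R] [Fintype m] [Fintype n] [DecidableEq m] [DecidableEq n]
    [Nonempty m] [Nonempty n] :
    (pullbackMatrix R (@Prod.fst m n) * (pullbackMatrix R (@Prod.fst m n))ᵀ
      + pullbackMatrix R (@Prod.snd m n) * (pullbackMatrix R (@Prod.snd m n))ᵀ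
      + Matrix.of fun (_ _ : m × n) => (1 : R)).rank + 1 = Fintype.card m + Fintype.card n := by
  have allOnes_eq : (Matrix.of fun (_ _ : m × n) => (1 : R)) =
      vecMulVec (bipartiteIncidence R m n *ᵥ Sum.elim 1 0)
        (bipartiteIncidence R m n *ᵥ Sum.elim 1 0) := by
    ext p q
    simp [bipartiteIncidence.mulVec_elim_one_zero, vecMulVec_apply]
  rw [← bipartiteIncidence.mul_transpose, allOnes_eq, rank_mul_transpose_add_vecMulVec_mulVec,
    bipartiteIncidence.rank_add_one]

/-- For `K ≥ 1`, the matrix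
`D = Δ_W Δ_Wᵀ + Δ_B Δ_Bᵀ + J ∈ ℝ^{2K×2K}` (with `J` the all-ones matrix) has rank `K + 1`. -/
theorem rank_D_eq_K_add_one (K : ℕ) (hK : 1 ≤ K) :
    (deltaW K * (deltaW K)ᵀ + deltaB K * (deltaB K)ᵀ
      + Matrix.of fun (_ _ : Fin K × Fin 2) => (1 : ℝ)).rank = K + 1 := by
  have : Nonempty (Fin K) := Fin.pos_iff_nonempty.mp hK
  rw [deltaW_eq_pullbackMatrix, deltaB_eq_pullbackMatrix]
  simpa using rank_D_eq_K_add_one_general ℝ (Fin K) (Fin 2)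
end
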